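/- For every s ∈ (0,1]: s > ln 2 if and only if s·χ(s) > 1. Moreover, if s·χ(s) > 1, then x₀ := 1 − ln(s·χ(s))/s satisfies 0 ≤ x₀ < 1. -/

import Mathlib

/-!
On the branch `s ≤ ln 2` we have `s χ = e^s − 1 ≤ 1`, so both sides of the equivalence fail.
On the branch `ln 2 ≤ s` we have `s χ = ξ = e^t` with `t ∈ [0, 1]` and `e^t (2 − t) = e^s`.
Here `t = 0` forces `e^s = 2`, while `0 < t ≤ 1` gives `e^s > 2` by `two_lt_exp_mul`; hence
`s > ln 2` exactly when `t > 0`. Finally `2 − t ≥ 1` yields `e^t ≤ e^s`, so `0 < t / s ≤ 1`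
whenever `t > 0`.
-/

/-- `χ` is the value `χ(s)`: it equals `(e^s − 1)/s` for `0 < s ≤ ln 2`, and `ξ(s)/s`
for `ln 2 ≤ s ≤ 1`, where `ξ(s)` is the unique `ξ ∈ [1, e]` with `ξ(2 − ln ξ) = e^s`. -/
def IsChiVal (s χ : ℝ) : Prop :=
  (s ≤ Real.log 2 ∧ χ = (Real.exp s - 1) / s) ∨
  (Real.log 2 ≤ s ∧ ∃ ξ : ℝ, ξ ∈ Set.Icc 1 (Real.exp 1) ∧
    ξ * (2 - Real.log ξ) = Real.exp s ∧ χ = ξ / s)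

/-- Follows from `e^t ≥ 1 + t + t²/2`, since `(1 + t + t²/2)(2 − t) = 2 + t − t³/2`. -/
lemma two_lt_exp_mul {t : ℝ} (h0 : 0 < t) (h1 : t ≤ 1) : 2 < Real.exp t * (2 - t) := by
  have hq := Real.quadratic_le_exp_of_nonneg h0.le
  have hm : (1 + t + t ^ 2 / 2) * (2 - t) ≤ Real.exp t * (2 - t) :=
    mul_le_mul_of_nonneg_right hq (by linarith)
  have ht : t ^ 3 ≤ t := pow_le_of_le_one h0.le h1 (by norm_num)
  nlinarith

theorem schi_fact
    (s : ℝ) (hs : s ∈ Set.Ioc (0 : ℝ) 1) (χ : ℝ) (hχ : IsChiVal s χ) :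
    (Real.log 2 < s ↔ 1 < s * χ) ∧
    (1 < s * χ →
      0 ≤ 1 - Real.log (s * χ) / s ∧ 1 - Real.log (s * χ) / s < 1) := by
  have hs0 : 0 < s := hs.1
  rcases hχ with ⟨hle, rfl⟩ | ⟨hge, ξ, ⟨h1, he⟩, heq, rfl⟩
  · rw [mul_div_cancel₀ _ hs0.ne']
    have h2 : Real.exp s ≤ 2 := (Real.le_log_iff_exp_le (by norm_num)).1 hle
    exact ⟨⟨fun h => by linarith, fun h => by linarith⟩, fun h => by linarith⟩
  · rw [mul_div_cancel₀ _ hs0.ne']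
    have hξ : 0 < ξ := by linarith
    have ht1 : Real.log ξ ≤ 1 := (Real.log_le_iff_le_exp hξ).2 he
    refine ⟨⟨fun h => ?_, fun h => ?_⟩, fun h => ?_⟩
    · refine lt_of_le_of_ne h1 ?_
      rintro rfl
      have h2 : 2 < Real.exp s := (Real.log_lt_iff_lt_exp (by norm_num)).1 h
      norm_num at heq
      linarith
    · have h2 := two_lt_exp_mul (Real.log_pos h) ht1
      rw [Real.exp_log hξ, heq] at h2
      exact (Real.log_lt_iff_lt_exp (by norm_num)).2 h2
    · have hts : Real.log ξ ≤ s := (Real.log_le_iff_le_exp hξ).2 (by nlinarith)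
      have hdiv : Real.log ξ / s ≤ 1 := (div_le_one hs0).2 hts
      have hpos : 0 < Real.log ξ / s := div_pos (Real.log_pos h) hs0
      constructor <;> linarith
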